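/- There exists a constant C > 0, depending on nothing, with the following property: for every function u : ℝ × (0,∞) → ℝ that is 2π-periodic in the first variable x and harmonic on ℝ × (0,∞), every x ∈ ℝ, every r ≥ 2 and every s ≥ 0, if the tail energy ε' := ∫_{(0,2π)×(r−1,∞)} |∇u|² dx dy is finite, then |u(x, r+s) − u(x, r)|² ≤ C·(s+1)·ε'. -/

import Mathlib

open MeasureTheory Real

/-- Partial derivative in the first variable. -/
noncomputable def pX (u : ℝ × ℝ → ℝ) (p : ℝ × ℝ) : ℝ := deriv (fun t => u (t, p.2)) p.1

/-- Partial derivative in the second variable. -/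
noncomputable def pY (u : ℝ × ℝ → ℝ) (p : ℝ × ℝ) : ℝ := deriv (fun t => u (p.1, t)) p.2

/-- Second partial derivative in the first variable. -/
noncomputable def pXX (u : ℝ × ℝ → ℝ) (p : ℝ × ℝ) : ℝ := deriv (fun t => pX u (t, p.2)) p.1

/-- Second partial derivative in the second variable. -/
noncomputable def pYY (u : ℝ × ℝ → ℝ) (p : ℝ × ℝ) : ℝ := deriv (fun t => pY u (p.1, t)) p.2

lemma circ (f : ℂ → ℂ) (c : ℂ) (hf : DifferentiableOn ℂ f (Metric.ball c 1)) (ρ : ℝ)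
    (h0 : 0 < ρ) (h1 : ρ < 1) :
    ENNReal.ofReal (2 * π) * ‖f c‖ₑ ^ 2 ≤
      ∫⁻ θ in Set.Ioo (-π) π, ‖f (c + Complex.polarCoord.symm (ρ, θ))‖ₑ ^ 2 := by
  have h2 : DifferentiableOn ℂ (fun z => f z ^ 2) (Metric.ball c 1) := hf.pow 2
  have h3 : DiffContOnCl ℂ (fun z => f z ^ 2) (Metric.ball c |ρ|) := by
    apply DifferentiableOn.diffContOnCl_ball h2
    rw [abs_of_pos h0]
    exact Metric.closedBall_subset_ball h1
  have h4 := h3.circleAverage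
  rw [circleAverage_def] at h4
  have hper : Function.Periodic (fun θ => f (circleMap c ρ θ) ^ 2) (2 * π) := by
    intro θ
    simp only [periodic_circleMap c ρ θ]
  have h5 := hper.intervalIntegral_add_eq 0 (-π)
  rw [zero_add, show -π + 2 * π = π by ring] at h5
  rw [h5] at h4
  have h6 : ((2 * π : ℝ)) • f c ^ 2 = ∫ θ in -π..π, f (circleMap c ρ θ) ^ 2 := by
    rw [← h4, smul_smul, mul_inv_cancel₀ (by positivity), one_smul]
  have h7 : ENNReal.ofReal (2 * π) * ‖f c‖ₑ ^ 2 = ‖((2 * π : ℝ)) • f c ^ 2‖ₑ := by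
    rw [enorm_smul, enorm_pow, Real.enorm_eq_ofReal (by positivity)]
  rw [h7, h6, intervalIntegral.integral_of_le (by linarith [pi_pos]), ← restrict_Ioo_eq_restrict_Ioc]
  refine (enorm_integral_le_lintegral_enorm _).trans (le_of_eq ?_)
  apply lintegral_congr
  intro θ
  rw [enorm_pow]
  congr 3
  simp [circleMap, Complex.polarCoord_symm_apply, Complex.exp_mul_I]

lemma meas_ind (f : ℂ → ℂ) (s : Set ℂ) (hs : IsOpen s) (hf : ContinuousOn f s) :
    Measurable (s.indicator (fun w => ‖f w‖ₑ ^ 2)) := by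
  classical
  rw [← Set.piecewise_eq_indicator]
  refine ContinuousOn.measurable_piecewise ?_ continuousOn_const hs.measurableSet
  exact (ENNReal.continuous_pow 2).comp_continuousOn (continuous_enorm.comp_continuousOn hf)

lemma submean (f : ℂ → ℂ) (c : ℂ) (hf : DifferentiableOn ℂ f (Metric.ball c 1)) :
    ENNReal.ofReal π * ‖f c‖ₑ ^ 2 ≤ ∫⁻ w in Metric.ball c 1, ‖f w‖ₑ ^ 2 := by
  rw [← lintegral_indicator measurableSet_ball]
  set F := (Metric.ball c 1).indicator (fun w => ‖f w‖ₑ ^ 2) with hF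
  have hFm : Measurable F := meas_ind f _ Metric.isOpen_ball hf.continuousOn
  rw [← lintegral_add_left_eq_self F c, ← Complex.lintegral_comp_polarCoord_symm]
  have hm : Measurable (fun p : ℝ × ℝ => ENNReal.ofReal p.1 • F (c + Complex.polarCoord.symm p)) := by
    have : Measurable (fun p : ℝ × ℝ => Complex.polarCoord.symm p) := by
      simp only [Complex.polarCoord_symm_apply]
      fun_prop
    exact (ENNReal.measurable_ofReal.comp measurable_fst).smul (hFm.comp (this.const_add c))
  rw [polarCoord_target, Measure.volume_eq_prod, setLIntegral_prod _ hm.aemeasurable]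
  have e1 : ENNReal.ofReal π * ‖f c‖ₑ ^ 2 =
      ∫⁻ ρ in Set.Ioo (0:ℝ) 1, ENNReal.ofReal ρ * (ENNReal.ofReal (2 * π) * ‖f c‖ₑ ^ 2) := by
    rw [lintegral_mul_const _ (by fun_prop), ← mul_assoc]
    congr 1
    rw [← ofReal_integral_eq_lintegral_ofReal]
    · rw [← ENNReal.ofReal_mul' (by positivity)]
      · congr 1
        rw [← integral_Ioc_eq_integral_Ioo, ← intervalIntegral.integral_of_le zero_le_one]
        simp
        try ring
    · exact (continuous_id.integrableOn_Icc (a := (0:ℝ)) (b := 1)).mono_set Set.Ioo_subset_Icc_self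
    · filter_upwards [ae_restrict_mem measurableSet_Ioo] with a ha using ha.1.le
  rw [e1]
  refine le_trans ?_ (lintegral_mono_set (s := Set.Ioo (0:ℝ) 1) Set.Ioo_subset_Ioi_self)
  refine setLIntegral_mono' measurableSet_Ioo ?_
  intro ρ hρ
  refine (mul_le_mul_right (circ f c hf ρ hρ.1 hρ.2) _).trans ?_
  rw [← lintegral_const_mul' _ _ ENNReal.ofReal_ne_top]
  apply lintegral_mono
  intro θ
  simp only [smul_eq_mul]
  rw [hF, Set.indicator_of_mem]
  rw [Metric.mem_ball, dist_eq_norm, add_sub_cancel_left, Complex.norm_polarCoord_symm, abs_of_pos hρ.1]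
  exact hρ.2

lemma derivX {V : ℂ → ℝ} {x y : ℝ} (h : DifferentiableAt ℝ V ⟨x, y⟩) :
    HasDerivAt (fun t : ℝ => V ⟨t, y⟩) (fderiv ℝ V ⟨x, y⟩ 1) x := by
  have h1 : HasDerivAt (fun t : ℝ => (⟨t, y⟩ : ℂ)) 1 x := by
    have : (fun t : ℝ => (⟨t, y⟩ : ℂ)) = fun t : ℝ => (t : ℂ) + y * Complex.I := by
      ext t; exact Complex.mk_eq_add_mul_I t y
    rw [this]
    exact (Complex.ofRealCLM.hasDerivAt (x := x)).add_const _
  exact h.hasFDerivAt.comp_hasDerivAt x h1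

lemma derivY {V : ℂ → ℝ} {x y : ℝ} (h : DifferentiableAt ℝ V ⟨x, y⟩) :
    HasDerivAt (fun t : ℝ => V ⟨x, t⟩) (fderiv ℝ V ⟨x, y⟩ Complex.I) y := by
  have h1 : HasDerivAt (fun t : ℝ => (⟨x, t⟩ : ℂ)) Complex.I y := by
    have : (fun t : ℝ => (⟨x, t⟩ : ℂ)) = fun t : ℝ => (x : ℂ) + t * Complex.I := by
      ext t; exact Complex.mk_eq_add_mul_I x t
    rw [this]
    simpa using ((Complex.ofRealCLM.hasDerivAt (x := y)).mul_const Complex.I).const_add (x : ℂ)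
  exact h.hasFDerivAt.comp_hasDerivAt y h1

lemma cd (u : ℝ × ℝ → ℝ) (hu : ContDiffOn ℝ 2 u {p : ℝ × ℝ | 0 < p.2}) (z : ℂ) (hz : 0 < z.im) :
    ContDiffAt ℝ 2 (fun w : ℂ => u (w.re, w.im)) z := by
  have h1 : ContDiffAt ℝ 2 u (z.re, z.im) :=
    hu.contDiffAt ((isOpen_lt continuous_const continuous_snd).mem_nhds hz)
  have h2 : ContDiffAt ℝ 2 (fun w : ℂ => (w.re, w.im)) z :=
    (Complex.equivRealProdCLM : ℂ →L[ℝ] ℝ × ℝ).contDiff.contDiffAt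
  exact ContDiffAt.comp z h1 h2

lemma pXeq (u : ℝ × ℝ → ℝ) (hu : ContDiffOn ℝ 2 u {p : ℝ × ℝ | 0 < p.2}) (x y : ℝ) (hy : 0 < y) :
    pX u (x, y) = fderiv ℝ (fun w : ℂ => u (w.re, w.im)) ⟨x, y⟩ 1 :=
  (derivX (V := fun w : ℂ => u (w.re, w.im)) ((cd u hu ⟨x, y⟩ hy).differentiableAt two_ne_zero)).deriv

lemma hasY (u : ℝ × ℝ → ℝ) (hu : ContDiffOn ℝ 2 u {p : ℝ × ℝ | 0 < p.2}) (x y : ℝ) (hy : 0 < y) :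
    HasDerivAt (fun t => u (x, t)) (fderiv ℝ (fun w : ℂ => u (w.re, w.im)) ⟨x, y⟩ Complex.I) y :=
  (derivY (V := fun w : ℂ => u (w.re, w.im)) ((cd u hu ⟨x, y⟩ hy).differentiableAt two_ne_zero))

lemma pYeq (u : ℝ × ℝ → ℝ) (hu : ContDiffOn ℝ 2 u {p : ℝ × ℝ | 0 < p.2}) (x y : ℝ) (hy : 0 < y) :
    pY u (x, y) = fderiv ℝ (fun w : ℂ => u (w.re, w.im)) ⟨x, y⟩ Complex.I :=
  (hasY u hu x y hy).deriv

lemma harm (u : ℝ × ℝ → ℝ) (hu : ContDiffOn ℝ 2 u {p : ℝ × ℝ | 0 < p.2})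
    (hl : ∀ p : ℝ × ℝ, 0 < p.2 → pXX u p + pYY u p = 0) (z : ℂ) (hz : 0 < z.im) :
    InnerProductSpace.HarmonicAt (fun w : ℂ => u (w.re, w.im)) z := by
  refine ⟨cd u hu z hz, ?_⟩
  filter_upwards [(isOpen_lt continuous_const Complex.continuous_im).mem_nhds hz] with w hw
  have hw : 0 < w.im := hw
  obtain ⟨x, y⟩ := w
  have hy : 0 < y := hw
  rw [InnerProductSpace.laplacian_eq_iteratedFDeriv_complexPlane]
  simp only [iteratedFDeriv_two_apply]
  have h1 := hl (x, y) hy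
  set U := fun w : ℂ => u (w.re, w.im) with hU
  have hd : DifferentiableAt ℝ (fderiv ℝ U) ⟨x, y⟩ :=
    ((cd u hu ⟨x, y⟩ hy).fderiv_right (m := 1) (by norm_num)).differentiableAt one_ne_zero
  have hX : pXX u (x, y) = fderiv ℝ (fderiv ℝ U) ⟨x, y⟩ 1 1 := by
    have e : (fun t => pX u (t, y)) = fun t => fderiv ℝ U ⟨t, y⟩ 1 := by
      ext t; exact pXeq u hu t y hy
    have h := derivX (V := fun w => fderiv ℝ U w 1) (x := x) (y := y)
      (hd.clm_apply (differentiableAt_const _))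
    simp only [pXX, e, h.deriv]
    rw [fderiv_clm_apply hd (differentiableAt_const _)]
    simp
  have hY : pYY u (x, y) = fderiv ℝ (fderiv ℝ U) ⟨x, y⟩ Complex.I Complex.I := by
    have e : (fun t => pY u (x, t)) =ᶠ[nhds y] fun t => fderiv ℝ U ⟨x, t⟩ Complex.I := by
      filter_upwards [lt_mem_nhds hy] with t ht
      exact pYeq u hu x t ht
    have h := derivY (V := fun w => fderiv ℝ U w Complex.I) (x := x) (y := y)
      (hd.clm_apply (differentiableAt_const _))
    simp only [pYY]
    rw [e.deriv_eq, h.deriv, fderiv_clm_apply hd (differentiableAt_const _)]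
    simp
  rw [hX, hY] at h1
  simpa using h1

noncomputable def gradC (u : ℝ × ℝ → ℝ) (z : ℂ) : ℂ :=
  fderiv ℝ (fun w : ℂ => u (w.re, w.im)) z 1 - Complex.I * fderiv ℝ (fun w : ℂ => u (w.re, w.im)) z Complex.I

lemma grad_enorm (u : ℝ × ℝ → ℝ) (hu : ContDiffOn ℝ 2 u {p : ℝ × ℝ | 0 < p.2}) (x y : ℝ) (hy : 0 < y) :
    ‖gradC u ⟨x, y⟩‖ₑ ^ 2 = ENNReal.ofReal (pX u (x, y) ^ 2 + pY u (x, y) ^ 2) := by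
  rw [← ofReal_norm, ← ENNReal.ofReal_pow (norm_nonneg _), ← Complex.normSq_eq_norm_sq,
    pXeq u hu x y hy, pYeq u hu x y hy]
  simp [gradC, Complex.normSq_apply]
  ring_nf

lemma periodic_lint (G : ℝ → ENNReal) (hG : ∀ x, G (x + 2 * π) = G x) (x : ℝ) :
    ∫⁻ a in Metric.ball x 1, G a ≤ ∫⁻ a in Set.Ioo 0 (2 * π), G a := by
  have hp : Function.Periodic G (2 * π) := hG
  have h := (isAddFundamentalDomain_Ioc (T := 2 * π) (by positivity) (x - π)).setLIntegral_eq
    (isAddFundamentalDomain_Ioc (T := 2 * π) (by positivity) 0) G (by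
      rintro ⟨g, hg⟩ a
      obtain ⟨n, rfl⟩ := AddSubgroup.mem_zmultiples_iff.1 hg
      change G (n • (2 * π) + a) = G a
      rw [add_comm]
      exact hp.zsmul n a)
  rw [zero_add] at h
  rw [restrict_Ioo_eq_restrict_Ioc, ← h]
  apply lintegral_mono_set
  intro a ha
  rw [Real.ball_eq_Ioo] at ha
  have := pi_gt_three
  constructor <;> linarith [ha.1, ha.2]

lemma cs (g : ℝ → ℝ) (r s : ℝ) (hs : 0 ≤ s) (hg : ContinuousOn g (Set.uIcc r (r + s))) :
    (∫ y in r..(r+s), g y) ^ 2 ≤ s * ∫ y in r..(r+s), g y ^ 2 := by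
  rcases hs.eq_or_lt with rfl | hs
  · simp
  set A := ∫ y in r..(r+s), g y with hA
  have i1 : IntervalIntegrable g volume r (r+s) := hg.intervalIntegrable
  have i2 : IntervalIntegrable (fun y => g y ^ 2) volume r (r+s) := (hg.pow 2).intervalIntegrable
  have h : 0 ≤ ∫ y in r..(r+s), (g y - A / s) ^ 2 :=
    intervalIntegral.integral_nonneg (by linarith) (fun _ _ => sq_nonneg _)
  have e : ∫ y in r..(r+s), (g y - A / s) ^ 2 =
      (∫ y in r..(r+s), g y ^ 2) - (2 * (A / s)) * A + s * (A / s) ^ 2 := by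
    have : (fun y => (g y - A / s) ^ 2) = fun y => g y ^ 2 - (2 * (A / s)) * g y + (A / s) ^ 2 := by
      ext y; ring
    rw [this, intervalIntegral.integral_add (i2.sub (i1.const_mul _)) intervalIntegrable_const,
      intervalIntegral.integral_sub i2 (i1.const_mul _), intervalIntegral.integral_const_mul, ← hA]
    simp
  rw [e] at h
  have : s * ((∫ y in r..(r+s), g y ^ 2) - (2 * (A / s)) * A + s * (A / s) ^ 2) =
    s * (∫ y in r..(r+s), g y ^ 2) - A ^ 2 := by field_simp; ring
  nlinarith [mul_nonneg hs.le h]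

lemma grad_diff (u : ℝ × ℝ → ℝ) (hu : ContDiffOn ℝ 2 u {p : ℝ × ℝ | 0 < p.2})
    (hl : ∀ p : ℝ × ℝ, 0 < p.2 → pXX u p + pYY u p = 0) :
    DifferentiableOn ℂ (gradC u) {z : ℂ | 0 < z.im} := fun z hz =>
  (HarmonicAt.differentiableAt_complex_partial (harm u hu hl z hz)).differentiableWithinAt

lemma swap_est (f : ℂ → ℂ) (hf : DifferentiableOn ℂ f {z : ℂ | 0 < z.im}) (x r s : ℝ) (hr : 2 ≤ r) :
    ENNReal.ofReal π * ∫⁻ y in Set.Ioc r (r + s), ‖f ⟨x, y⟩‖ₑ ^ 2 ≤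
      2 * ∫⁻ w in {w : ℂ | w.re ∈ Metric.ball x 1 ∧ r - 1 < w.im},
        ({z : ℂ | 0 < z.im}.indicator (fun w => ‖f w‖ₑ ^ 2) w) := by
  have hUo : IsOpen {z : ℂ | 0 < z.im} := isOpen_lt continuous_const Complex.continuous_im
  set H := {z : ℂ | 0 < z.im}.indicator (fun w => ‖f w‖ₑ ^ 2) with hH
  have hHm : Measurable H := meas_ind f _ hUo hf.continuousOn
  set S := {w : ℂ | w.re ∈ Metric.ball x 1 ∧ r - 1 < w.im} with hS
  have hSm : MeasurableSet S :=
    ((Metric.isOpen_ball.preimage Complex.continuous_re).inter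
      (isOpen_lt continuous_const Complex.continuous_im)).measurableSet
  let T : Set (ℝ × ℂ) := {q | q.1 ∈ Metric.ball q.2.im 1}
  have hTm : MeasurableSet T := by
    have : IsOpen {q : ℝ × ℂ | dist q.1 q.2.im < 1} :=
      isOpen_lt (by fun_prop) continuous_const
    exact this.measurableSet
  let K : ℝ → ℂ → ENNReal := fun y w => T.indicator (fun q => S.indicator H q.2) (y, w)
  have hKm : Measurable (Function.uncurry K) :=
    ((hHm.indicator hSm).comp measurable_snd).indicator hTm
  rw [← lintegral_const_mul' _ _ ENNReal.ofReal_ne_top]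
  calc _ ≤ ∫⁻ y in Set.Ioc r (r + s), ∫⁻ w, K y w := by
        refine setLIntegral_mono' measurableSet_Ioc ?_
        intro y hy
        have key : ∀ w ∈ Metric.ball (⟨x, y⟩ : ℂ) 1, |w.re - x| < 1 ∧ |w.im - y| < 1 := by
          intro w hw
          rw [Metric.mem_ball, dist_eq_norm] at hw
          have h1 := Complex.abs_re_le_norm (w - ⟨x, y⟩)
          have h2 := Complex.abs_im_le_norm (w - ⟨x, y⟩)
          rw [Complex.sub_re] at h1
          rw [Complex.sub_im] at h2
          exact ⟨h1.trans_lt hw, h2.trans_lt hw⟩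
        have hpos : ∀ w ∈ Metric.ball (⟨x, y⟩ : ℂ) 1, r - 1 < w.im := by
          intro w hw
          have := (abs_lt.1 (key w hw).2).1
          linarith [hy.1]
        refine (submean f ⟨x, y⟩ (hf.mono fun w hw => ?_)).trans ?_
        · have := hpos w hw
          change 0 < w.im
          linarith
        rw [← lintegral_indicator measurableSet_ball]
        apply lintegral_mono
        intro w
        apply Set.indicator_le
        intro w hw
        have hT : (y, w) ∈ T := by
          change dist y w.im < 1
          rw [dist_comm, Real.dist_eq]
          exact (key w hw).2
        have hwS : w ∈ S := by
          refine ⟨?_, hpos w hw⟩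
          rw [Metric.mem_ball, Real.dist_eq]
          exact (key w hw).1
        have hwU : w ∈ {z : ℂ | 0 < z.im} := by
          have := hpos w hw
          change 0 < w.im
          linarith
        simp only [K, Set.indicator_of_mem hT, Set.indicator_of_mem hwS]
        rw [hH, Set.indicator_of_mem hwU]
    _ ≤ ∫⁻ y, ∫⁻ w, K y w := setLIntegral_le_lintegral _ _
    _ = ∫⁻ w, ∫⁻ y, K y w := lintegral_lintegral_swap hKm.aemeasurable
    _ = ∫⁻ w, 2 * S.indicator H w := by
        apply lintegral_congr
        intro w
        have : (fun y => K y w) = (Metric.ball w.im 1).indicator (fun _ => S.indicator H w) := by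
          ext y
          rfl
        rw [this, lintegral_indicator measurableSet_ball, setLIntegral_const, Real.volume_ball, mul_comm]
        simp
    _ = _ := by
        rw [lintegral_const_mul _ (hHm.indicator hSm), lintegral_indicator hSm]

lemma strip_est (u : ℝ × ℝ → ℝ) (hper : ∀ x y : ℝ, u (x + 2 * π, y) = u (x, y))
    (hu : ContDiffOn ℝ 2 u {p : ℝ × ℝ | 0 < p.2})
    (hl : ∀ p : ℝ × ℝ, 0 < p.2 → pXX u p + pYY u p = 0) (x r : ℝ) (hr : 2 ≤ r) :
    ∫⁻ w in {w : ℂ | w.re ∈ Metric.ball x 1 ∧ r - 1 < w.im},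
        ({z : ℂ | 0 < z.im}.indicator (fun w => ‖gradC u w‖ₑ ^ 2) w) ≤
      ∫⁻ p in Set.Ioo (0 : ℝ) (2 * π) ×ˢ Set.Ioi (r - 1),
        ENNReal.ofReal (pX u p ^ 2 + pY u p ^ 2) := by
  have hUo : IsOpen {z : ℂ | 0 < z.im} := isOpen_lt continuous_const Complex.continuous_im
  set H := {z : ℂ | 0 < z.im}.indicator (fun w => ‖gradC u w‖ₑ ^ 2) with hH
  have hHm : Measurable H := meas_ind _ _ hUo (grad_diff u hu hl).continuousOn
  have hmp := Complex.volume_preserving_equiv_real_prod.symm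
  have hme : MeasurableEmbedding Complex.measurableEquivRealProd.symm :=
    Complex.measurableEquivRealProd.symm.measurableEmbedding
  rw [← hmp.setLIntegral_comp_preimage_emb hme]
  have hE : ∀ p : ℝ × ℝ, 0 < p.2 → H (Complex.measurableEquivRealProd.symm p) =
      ENNReal.ofReal (pX u p ^ 2 + pY u p ^ 2) := by
    rintro ⟨a, b⟩ hb
    rw [← grad_enorm u hu a b hb, hH]
    exact Set.indicator_of_mem (s := {z : ℂ | 0 < z.im}) (a := (⟨a, b⟩ : ℂ)) hb _
  have hset : Complex.measurableEquivRealProd.symm ⁻¹' {w : ℂ | w.re ∈ Metric.ball x 1 ∧ r - 1 < w.im}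
      = Metric.ball x 1 ×ˢ Set.Ioi (r - 1) := by
    ext p
    rfl
  have hGm : Measurable (fun p : ℝ × ℝ => H (Complex.measurableEquivRealProd.symm p)) :=
    hHm.comp Complex.measurableEquivRealProd.symm.measurable
  have hR : ∫⁻ p in Set.Ioo (0 : ℝ) (2 * π) ×ˢ Set.Ioi (r - 1),
        ENNReal.ofReal (pX u p ^ 2 + pY u p ^ 2) =
      ∫⁻ p in Set.Ioo (0 : ℝ) (2 * π) ×ˢ Set.Ioi (r - 1),
        H (Complex.measurableEquivRealProd.symm p) := by
    refine setLIntegral_congr_fun (measurableSet_Ioo.prod measurableSet_Ioi) ?_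
    intro p hp
    have : r - 1 < p.2 := hp.2
    exact (hE p (by linarith)).symm
  rw [hR, hset, Measure.volume_eq_prod, setLIntegral_prod _ hGm.aemeasurable,
    setLIntegral_prod _ hGm.aemeasurable]
  refine periodic_lint
    (fun a => ∫⁻ b in Set.Ioi (r - 1), H (Complex.measurableEquivRealProd.symm (a, b))) ?_ x
  intro a
  refine setLIntegral_congr_fun measurableSet_Ioi ?_
  intro b hb
  have hb0 : 0 < b := by
    have : r - 1 < b := hb
    linarith
  change H (Complex.measurableEquivRealProd.symm (a + 2 * π, b)) = H (Complex.measurableEquivRealProd.symm (a, b))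
  rw [hE (a + 2 * π, b) hb0, hE (a, b) hb0]
  have h1 : pX u (a + 2 * π, b) = pX u (a, b) := by
    simp only [pX]
    rw [← deriv_comp_add_const (fun t => u (t, b)) (2 * π) a]
    simp only [hper]
  have h2 : pY u (a + 2 * π, b) = pY u (a, b) := by
    simp only [pY, hper]
  rw [h1, h2]

/-- Oscillation of a harmonic function on the half-cylinder is controlled by its
tail energy: `|u(x, r+s) − u(x, r)|² ≤ C (s+1) ε'`. -/
theorem statement10 :
    ∃ C : ℝ, 0 < C ∧
      ∀ u : ℝ × ℝ → ℝ,
        (∀ x y : ℝ, u (x + 2 * π, y) = u (x, y)) →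
        ContDiffOn ℝ 2 u {p : ℝ × ℝ | 0 < p.2} →
        (∀ p : ℝ × ℝ, 0 < p.2 → pXX u p + pYY u p = 0) →
        ∀ x r s : ℝ, 2 ≤ r → 0 ≤ s →
          IntegrableOn (fun p => pX u p ^ 2 + pY u p ^ 2)
            (Set.Ioo (0 : ℝ) (2 * π) ×ˢ Set.Ioi (r - 1)) →
          (u (x, r + s) - u (x, r)) ^ 2
            ≤ C * (s + 1) *
              ∫ p in Set.Ioo (0 : ℝ) (2 * π) ×ˢ Set.Ioi (r - 1),
                (pX u p ^ 2 + pY u p ^ 2) := by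
  refine ⟨1, one_pos, ?_⟩
  intro u hper hu hl x r s hr hs hint
  set I := ∫ p in Set.Ioo (0 : ℝ) (2 * π) ×ˢ Set.Ioi (r - 1), (pX u p ^ 2 + pY u p ^ 2) with hI
  have hI0 : 0 ≤ I := integral_nonneg fun p => by positivity
  have hIl : ENNReal.ofReal I = ∫⁻ p in Set.Ioo (0 : ℝ) (2 * π) ×ˢ Set.Ioi (r - 1),
        ENNReal.ofReal (pX u p ^ 2 + pY u p ^ 2) :=
    ofReal_integral_eq_lintegral_ofReal hint (Filter.Eventually.of_forall fun p => by
      show 0 ≤ pX u p ^ 2 + pY u p ^ 2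
      positivity)
  have hest := (swap_est (gradC u) (grad_diff u hu hl) x r s hr).trans
    (mul_le_mul_right (strip_est u hper hu hl x r hr) 2)
  rw [← hIl] at hest
  set g : ℝ → ℝ := fun y => fderiv ℝ (fun w : ℂ => u (w.re, w.im)) ⟨x, y⟩ Complex.I with hg
  have hIcc : Set.uIcc r (r + s) = Set.Icc r (r + s) := Set.uIcc_of_le (by linarith)
  have hgc : ContinuousOn g (Set.uIcc r (r + s)) := by
    intro y hy
    rw [hIcc] at hy
    have hy0 : 0 < y := by linarith [hy.1]
    have h1 : ContinuousAt (fderiv ℝ (fun w : ℂ => u (w.re, w.im))) ⟨x, y⟩ :=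
      ((cd u hu ⟨x, y⟩ hy0).fderiv_right (m := 1) (by norm_num)).continuousAt
    have h2 : ContinuousAt (fun t : ℝ => (⟨x, t⟩ : ℂ)) y := by
      have : (fun t : ℝ => (⟨x, t⟩ : ℂ)) = fun t : ℝ => (x : ℂ) + t * Complex.I := by
        ext t; exact Complex.mk_eq_add_mul_I x t
      rw [this]
      fun_prop
    have h3 : ContinuousAt (fun t : ℝ => fderiv ℝ (fun w : ℂ => u (w.re, w.im)) ⟨x, t⟩) y :=
      ContinuousAt.comp (f := fun t : ℝ => (⟨x, t⟩ : ℂ)) h1 h2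
    exact (h3.clm_apply continuousAt_const).continuousWithinAt
  have hftc : ∫ y in r..(r + s), g y = u (x, r + s) - u (x, r) := by
    refine intervalIntegral.integral_eq_sub_of_hasDerivAt (f := fun y => u (x, y)) ?_
      hgc.intervalIntegrable
    intro y hy
    rw [hIcc] at hy
    exact hasY u hu x y (by linarith [hy.1])
  have hcs := cs g r s hs hgc
  rw [hftc] at hcs
  have hJ0 : 0 ≤ ∫ y in r..(r + s), g y ^ 2 :=
    intervalIntegral.integral_nonneg (by linarith) fun _ _ => sq_nonneg _
  have hJ : π * ∫ y in r..(r + s), g y ^ 2 ≤ 2 * I := by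
    rw [← ENNReal.ofReal_le_ofReal_iff (by positivity), ENNReal.ofReal_mul pi_pos.le,
      ENNReal.ofReal_mul zero_le_two]
    refine le_trans ?_ (hest.trans (le_of_eq (by simp)))
    gcongr
    rw [intervalIntegral.integral_of_le (by linarith), ofReal_integral_eq_lintegral_ofReal]
    · refine setLIntegral_mono' measurableSet_Ioc ?_
      intro y hy
      have hy0 : 0 < y := by linarith [hy.1]
      rw [grad_enorm u hu x y hy0, pYeq u hu x y hy0]
      apply ENNReal.ofReal_le_ofReal
      have := sq_nonneg (pX u (x, y))
      simp only [hg]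
      linarith
    · exact ((hgc.pow 2).intervalIntegrable).1
    · exact Filter.Eventually.of_forall fun y => sq_nonneg _
  have hJI : ∫ y in r..(r + s), g y ^ 2 ≤ I := by
    nlinarith [pi_gt_three]
  calc (u (x, r + s) - u (x, r)) ^ 2 ≤ s * ∫ y in r..(r + s), g y ^ 2 := hcs
    _ ≤ s * I := by gcongr
    _ ≤ 1 * (s + 1) * I := by nlinarith
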